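/- arXiv:1605.08416 — 2 statements merged into one kernel-verified Lean document; each statement's English description precedes it below -/
import Mathlib

section
/- Fix a ∈ {0,1}^n of Hamming weight n/3 and c, c' ∈ {0,1}^n of Hamming weight 2n/3 with c ≠ c'. For w uniformly random in (Z/MZ)^{n+1}, the three values h_0(a,w), h_2(c,w), h_2(c',w) are independent and each uniformly distributed in Z/MZ, provided a ≤ c and a ≤ c' coordinatewise (i.e., c−a and c'−a are 0/1 vectors) — in particular the probability that all three equal a fixed β ∈ Z/MZ is M^{-3}. -/
open Finset

/-!
If `a k = 1`, `a i = 0` and `c`, `c'` differ by one at `i`, the matrix with rows `(0, a)`,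
`(1, c)`, `(1, c')` has, in the columns of `w₀`, `w_k`, `w_i`, a minor equal to `±1`; hence
`w ↦ (h₀(a, w), h₂(c, w), h₂(c', w))` is a surjective homomorphism, and all its fibres have the
same size. Such an `i` is any coordinate where `c` and `c'` differ: one of them vanishes there, and
`a` lies below both.
-/

theorem card_fiber_mul_card_of_surjective {G H : Type*} [AddGroup G] [Fintype G] [AddMonoid H]
    [Fintype H] [DecidableEq H] {f : G →+ H} (hf : Function.Surjective f) (y : H) :
    #{x | f x = y} * Fintype.card H = Fintype.card G :=
  calc #{x | f x = y} * Fintype.card H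
      = ∑ _z : H, #{x | f x = y} := by rw [sum_const, card_univ, smul_eq_mul, mul_comm]
    _ = ∑ z : H, #{x | f x = z} :=
        sum_congr rfl fun z _ => AddMonoidHom.card_fiber_eq_of_mem_range f (hf y) (hf z)
    _ = Fintype.card G := (card_eq_sum_card_fiberwise fun _ _ => mem_coe.2 (mem_univ _)).symm

section Hash

variable {n : ℕ} {G : Type*} [AddCommGroup G]

/-- The hash function `h₀(a, w) = ∑ a_s w_s`, as a homomorphism in `w`. The entries of `w` may lie
in any abelian group; `w 0` is the extra coordinate `w₀` and `w s.succ` stands for `w_s`. -/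
def hash₀ (a : Fin n → ℕ) : (Fin (n + 1) → G) →+ G :=
  ∑ s, a s • Pi.evalAddMonoidHom _ s.succ

/-- The hash function `h₂(c, w) = w₀ + ∑ c_s w_s`, as a homomorphism in `w`, with the conventions of
`hash₀`. -/
def hash₂ (c : Fin n → ℕ) : (Fin (n + 1) → G) →+ G :=
  Pi.evalAddMonoidHom _ 0 + hash₀ c

/-- The joint hash `w ↦ (h₀(a, w), h₂(c, w), h₂(c', w))`, whose uniform distribution expresses that
the three values are independent and uniform. -/
def hashTriple (a c c' : Fin n → ℕ) : (Fin (n + 1) → G) →+ G × G × G :=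
  (hash₀ a).prod ((hash₂ c).prod (hash₂ c'))

theorem hash₀_apply (a : Fin n → ℕ) (w : Fin (n + 1) → G) :
    hash₀ a w = ∑ s, a s • w s.succ := by
  simp [hash₀]

theorem hash₂_apply (c : Fin n → ℕ) (w : Fin (n + 1) → G) :
    hash₂ c w = w 0 + ∑ s, c s • w s.succ := by
  simp [hash₂, hash₀_apply]

theorem hashTriple_eq_iff {a c c' : Fin n → ℕ} {w : Fin (n + 1) → G} {x y z : G} :
    hashTriple a c c' w = (x, y, z) ↔ hash₀ a w = x ∧ hash₂ c w = y ∧ hash₂ c' w = z := by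
  simp only [hashTriple, AddMonoidHom.prod_apply, Prod.mk.injEq]

theorem sum_smul_single_add_single (a : Fin n → ℕ) (k i : Fin n) (x y : G) :
    ∑ s, a s • (Pi.single k x + Pi.single i y : Fin n → G) s = a k • x + a i • y := by
  simp [sum_add_distrib, Pi.single_apply, smul_ite]

variable {a c c' : Fin n → ℕ} {i k : Fin n}

theorem hashTriple_surjective_of_eq_add_one (hak : a k = 1) (hai : a i = 0)
    (hci : c i = c' i + 1) :
    Function.Surjective (hashTriple (G := G) a c c') := by
  rintro ⟨x, y, z⟩
  -- Back substitution: `h₀` determines `w_k`, the difference of the two `h₂` then `w_i`.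
  let u : G := y - z - c k • x + c' k • x
  refine ⟨Fin.cons (z - c' k • x - c' i • u) (Pi.single k x + Pi.single i u), ?_⟩
  simp only [hashTriple_eq_iff, hash₀_apply, hash₂_apply, Fin.cons_zero, Fin.cons_succ,
    sum_smul_single_add_single, hak, hai, hci, add_smul, one_smul, zero_smul, add_zero, true_and]
  constructor <;> (simp only [u]; abel)

theorem hashTriple_surjective_swap (h : Function.Surjective (hashTriple (G := G) a c c')) :
    Function.Surjective (hashTriple (G := G) a c' c) :=
  (Function.surjective_id.prodMap Prod.swap_surjective).comp h

theorem exists_ne_and_eq_zero (hc : ∀ s, c s ≤ 1) (hc' : ∀ s, c' s ≤ 1) (hne : c ≠ c')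
    (hac : ∀ s, a s ≤ c s) (hac' : ∀ s, a s ≤ c' s) : ∃ i, c i ≠ c' i ∧ a i = 0 := by
  obtain ⟨i, hi⟩ := Function.ne_iff.1 hne
  exact ⟨i, hi, by grind⟩

theorem hashTriple_surjective (hc : ∀ s, c s ≤ 1) (hc' : ∀ s, c' s ≤ 1) (ha : a ≠ 0)
    (hne : c ≠ c') (hac : ∀ s, a s ≤ c s) (hac' : ∀ s, a s ≤ c' s) :
    Function.Surjective (hashTriple (G := G) a c c') := by
  obtain ⟨k, hk⟩ := Function.ne_iff.1 ha
  obtain ⟨i, hi, hai⟩ := exists_ne_and_eq_zero hc hc' hne hac hac'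
  have hak : a k = 1 := le_antisymm ((hac k).trans (hc k)) (Nat.one_le_iff_ne_zero.2 hk)
  rcases hi.lt_or_gt with hlt | hgt
  · have hci : c' i = c i + 1 := by grind
    exact hashTriple_surjective_swap (hashTriple_surjective_of_eq_add_one hak hai hci)
  · have hci : c i = c' i + 1 := by grind
    exact hashTriple_surjective_of_eq_add_one hak hai hci

theorem two_le_of_ne_zero_of_eq_zero (ha : a ≠ 0) (hai : a i = 0) : 2 ≤ n := by
  obtain ⟨k, hk⟩ := Function.ne_iff.1 ha
  have hik : i ≠ k := by
    rintro rfl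
    exact hk hai
  exact (Fintype.one_lt_card_iff.2 ⟨i, k, hik⟩).trans_eq (Fintype.card_fin n)

theorem stmt15_general [Fintype G] [DecidableEq G] (hc : ∀ s, c s ≤ 1) (hc' : ∀ s, c' s ≤ 1)
    (ha : a ≠ 0) (hne : c ≠ c') (hac : ∀ s, a s ≤ c s) (hac' : ∀ s, a s ≤ c' s) (β₀ β₁ β₂ : G) :
    #{w : Fin (n + 1) → G | hash₀ a w = β₀ ∧ hash₂ c w = β₁ ∧ hash₂ c' w = β₂} =
      Fintype.card G ^ (n - 2) := by
  have hsurj := hashTriple_surjective (G := G) hc hc' ha hne hac hac'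
  obtain ⟨i, -, hai⟩ := exists_ne_and_eq_zero hc hc' hne hac hac'
  obtain ⟨m, rfl⟩ := Nat.exists_eq_add_of_le' (two_le_of_ne_zero_of_eq_zero ha hai)
  have hfiber := card_fiber_mul_card_of_surjective hsurj (β₀, β₁, β₂)
  simp only [hashTriple_eq_iff, Fintype.card_prod, Fintype.card_fun, Fintype.card_fin] at hfiber
  refine Nat.eq_of_mul_eq_mul_right (pow_pos (Fintype.card_pos (α := G)) 3) ?_
  calc _ = Fintype.card G ^ (m + 2 + 1) := by rw [← hfiber]; ring
    _ = Fintype.card G ^ (m + 2 - 2) * Fintype.card G ^ 3 := by rw [Nat.add_sub_cancel]; ring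

end Hash

theorem ne_zero_of_card_filter_eq_one_eq_div {n d : ℕ} {a : Fin n → ℕ} (hd : d ∣ n) (hn : n ≠ 0)
    (h : #{s | a s = 1} = n / d) : a ≠ 0 := by
  rintro rfl
  have hdiv : n / d = 0 := by simpa using h.symm
  exact hn (Nat.eq_zero_of_dvd_of_div_eq_zero hd hdiv)

/-- For fixed `a` of Hamming weight `n/3` and distinct `c, c'` of Hamming weight
`2n/3` with `a ≤ c`, `a ≤ c'` coordinatewise, the triple
`(h₀(a,w), h₂(c,w), h₂(c',w))` is uniformly distributed in `(ℤ/Mℤ)³` as `w`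
ranges uniformly over `(ℤ/Mℤ)^{n+1}`: each value `(β₀, β₁, β₂)` is attained by
exactly `M^{n-2}` choices of `w` (so in particular the probability that all
three equal a fixed `β` is `M⁻³`). -/
theorem stmt15 (M n : ℕ) [NeZero M] (hM : Odd M) (hn : 3 ∣ n)
    (a c c' : Fin n → ℕ)
    (ha : ∀ s, a s ≤ 1) (hc : ∀ s, c s ≤ 1) (hc' : ∀ s, c' s ≤ 1)
    (hwa : (univ.filter fun s => a s = 1).card = n / 3)
    (hwc : (univ.filter fun s => c s = 1).card = 2 * n / 3)
    (hwc' : (univ.filter fun s => c' s = 1).card = 2 * n / 3)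
    (hne : c ≠ c')
    (hac : ∀ s, a s ≤ c s) (hac' : ∀ s, a s ≤ c' s)
    (β₀ β₁ β₂ : ZMod M) :
    (univ.filter fun w : Fin (n + 1) → ZMod M =>
        (∑ s : Fin n, (a s : ZMod M) * w s.succ) = β₀ ∧
        (w 0 + ∑ s : Fin n, (c s : ZMod M) * w s.succ) = β₁ ∧
        (w 0 + ∑ s : Fin n, (c' s : ZMod M) * w s.succ) = β₂).card =
      M ^ (n - 2) := by
  obtain ⟨i, -⟩ := Function.ne_iff.1 hne
  have ha₀ : a ≠ 0 := ne_zero_of_card_filter_eq_one_eq_div hn i.pos.ne' hwa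
  simpa only [hash₀_apply, hash₂_apply, nsmul_eq_mul, ZMod.card] using
    stmt15_general hc hc' ha₀ hne hac hac' β₀ β₁ β₂
end

section
/- For all sufficiently large n divisible by 3, there exists a tri-colored sum-free set in F_2^n of size greater than C(n, n/3) · 2^{-√(16n/3)}. -/
/-!
Fix a prime `M` of size about `6 * (2 * k).choose k` and a large subset `A` of `ZMod M` free of
three-term progressions. Random weights `w` on the coordinates and random offsets `α`, `β` hash
each pair `(x, y)` of disjoint `k`-subsets of `Fin (3 * k)` to `α + w(x)` and `β + w(y)`; keep the
pair when both values agree and lie in `A`. If `x` and `y` are disjoint with union `z`, then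
`(α + β + w(z)) / 2` is the midpoint of the two hash values, so if `x`, `y` and `z` each come from
a kept pair, the three values form a progression in `A` and coincide: `(x, y)` is itself kept.
Thus a zero sum of characteristic vectors off the diagonal can only come from two kept pairs that
share one of their three sets. On average these conflicts are at most half as frequent as the kept
pairs, and deleting them leaves at least `(3 * k).choose k * #A / (24 * M)` pairs.

For `A` we use the Green–Wolf form of Elkin's bound. Among the digit vectors in `Fin D → ZMod M`
with digits below `(M + 1) / 2`, choose a thin spherical shell `U`. By the parallelogram law any
progression in `U` has a short difference, so progressions are rare. The trace of `U` on a random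
line is a dense subset of `ZMod M` with few progressions, and deleting their centres leaves `A`.
-/

open Finset

/-- A triple of families `a`, `b`, `c` in an additive monoid is tri-colored sum-free if its only
zero sums `a i + b j + c k` are the diagonal ones. -/
def IsTricoloredSumFree {ι G : Type*} [AddMonoid G] (a b c : ι → G) : Prop :=
  ∀ i j k, a i + b j + c k = 0 ↔ i = j ∧ j = k

theorem exists_sum_card_le_mul_card_sdiff_image {Ω α β : Type*} [Fintype Ω] [Nonempty Ω]
    [DecidableEq α] (S : Ω → Finset α) (B : Ω → Finset β) (v : β → α)
    (hBS : 2 * ∑ ω, #(B ω) ≤ ∑ ω, #(S ω)) :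
    ∃ ω, ∑ ω', #(S ω') ≤ 2 * Fintype.card Ω * #(S ω \ (B ω).image v) := by
  set N := Fintype.card Ω
  have hsum : ∑ ω, (∑ ω', #(S ω') + 2 * N * #(B ω)) ≤ ∑ ω, 2 * N * #(S ω) := by
    rw [sum_add_distrib, sum_const, card_univ, smul_eq_mul, ← mul_sum, ← mul_sum]
    calc N * ∑ ω, #(S ω) + 2 * N * ∑ ω, #(B ω)
        = N * (∑ ω, #(S ω) + 2 * ∑ ω, #(B ω)) := by ring
      _ ≤ N * (∑ ω, #(S ω) + ∑ ω, #(S ω)) := by gcongr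
      _ = 2 * N * ∑ ω, #(S ω) := by ring
  obtain ⟨ω, -, hω⟩ := exists_le_of_sum_le univ_nonempty hsum
  refine ⟨ω, Nat.le_of_add_le_add_right (hω.trans ?_)⟩
  have hcard : #(S ω) ≤ #(S ω \ (B ω).image v) + #(B ω) := calc
    #(S ω) ≤ #(S ω \ (B ω).image v) + #((B ω).image v) := by
      have := le_card_sdiff ((B ω).image v) (S ω)
      omega
    _ ≤ _ := by gcongr; exact card_image_le
  rw [← mul_add]
  gcongr

/-- The nontrivial three-term arithmetic progressions in `s`, encoded as pairs
(centre, difference). -/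
def progressions {G : Type*} [AddCommGroup G] [Fintype G] [DecidableEq G] (s : Finset G) :
    Finset (G × G) := {e | e.2 ≠ 0 ∧ e.1 ∈ s ∧ e.1 - e.2 ∈ s ∧ e.1 + e.2 ∈ s}

theorem threeAPFree_sdiff_image_progressions {G : Type*} [AddCommGroup G] [Fintype G]
    [DecidableEq G] (s : Finset G) :
    ThreeAPFree (↑(s \ (progressions s).image Prod.fst) : Set G) := by
  intro a ha b hb c hc habc
  by_contra hab
  have hc' : b + (b - a) = c := by rw [← add_sub_assoc, ← habc, add_sub_cancel_left]
  refine (mem_sdiff.1 hb).2 (mem_image.2 ⟨(b, b - a), mem_filter.2 ⟨mem_univ _, ?_⟩, rfl⟩)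
  refine ⟨sub_ne_zero.2 (Ne.symm hab), (mem_sdiff.1 hb).1, ?_, ?_⟩
  · rw [sub_sub_cancel]
    exact (mem_sdiff.1 ha).1
  · rw [hc']
    exact (mem_sdiff.1 hc).1

/-! ### Random lines -/

section Line

variable {F E : Type*} [Field F] [AddCommGroup E] [Module F E] [Fintype E]

theorem card_filter_smul_add_mem [DecidableEq E] (U : Finset E) (n : F) :
    #{p : E × E | n • p.1 + p.2 ∈ U} = Fintype.card E * #U := by
  rw [← card_univ, ← card_product]
  exact card_equiv (Equiv.prodShear (Equiv.refl E) fun x ↦ Equiv.addLeft (n • x)) (by simp)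

theorem card_filter_smul_add_mem_and_le [DecidableEq E] {U T : Finset E}
    (hUT : ∀ u ∈ U, ∀ t, u - t ∈ U → u + t ∈ U → t ∈ T) (n : F) {d : F} (hd : d ≠ 0) :
    #{p : E × E | n • p.1 + p.2 ∈ U ∧ (n - d) • p.1 + p.2 ∈ U ∧ (n + d) • p.1 + p.2 ∈ U}
      ≤ #U * #T := by
  rw [← card_product]
  refine card_le_card_of_injOn (fun p ↦ (n • p.1 + p.2, d • p.1)) ?_ ?_
  · rintro ⟨x, y⟩ hp
    obtain ⟨hmid, hleft, hright⟩ := (mem_filter.1 hp).2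
    refine mem_product.2 ⟨hmid, hUT _ hmid _ ?_ ?_⟩
    · rwa [show n • x + y - d • x = (n - d) • x + y by module]
    · rwa [show n • x + y + d • x = (n + d) • x + y by module]
  · rintro ⟨x, y⟩ - ⟨x', y'⟩ - h
    obtain ⟨h₁, h₂⟩ := Prod.mk.inj h
    obtain rfl : x = x' := smul_right_injective E hd h₂
    exact Prod.ext rfl (add_left_cancel h₁)

variable [Fintype F]

/-- The trace of `U` on the affine line `n ↦ n • p.1 + p.2`. -/
def lineTrace (F : Type*) [Field F] [Module F E] [Fintype F] [DecidableEq E] (U : Finset E)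
    (p : E × E) : Finset F := {n | n • p.1 + p.2 ∈ U}

theorem sum_card_lineTrace [DecidableEq E] (U : Finset E) :
    ∑ p, #(lineTrace F U p) = Fintype.card F * (Fintype.card E * #U) := calc
  _ = ∑ n : F, #{p : E × E | n • p.1 + p.2 ∈ U} :=
    sum_card_bipartiteAbove_eq_sum_card_bipartiteBelow fun (p : E × E) (n : F) ↦
      n • p.1 + p.2 ∈ U
  _ = _ := by simp_rw [card_filter_smul_add_mem, sum_const, card_univ, smul_eq_mul]

theorem sum_card_progressions_lineTrace_le [DecidableEq F] [DecidableEq E] {U T : Finset E}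
    (hUT : ∀ u ∈ U, ∀ t, u - t ∈ U → u + t ∈ U → t ∈ T) :
    ∑ p, #(progressions (lineTrace F U p)) ≤ Fintype.card F ^ 2 * (#U * #T) := calc
  _ = ∑ e : F × F, #{p : E × E | e.2 ≠ 0 ∧ e.1 ∈ lineTrace F U p ∧
        e.1 - e.2 ∈ lineTrace F U p ∧ e.1 + e.2 ∈ lineTrace F U p} :=
    sum_card_bipartiteAbove_eq_sum_card_bipartiteBelow fun (p : E × E) (e : F × F) ↦
      e.2 ≠ 0 ∧ e.1 ∈ lineTrace F U p ∧ e.1 - e.2 ∈ lineTrace F U p ∧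
        e.1 + e.2 ∈ lineTrace F U p
  _ ≤ ∑ _e : F × F, #U * #T := by
    refine sum_le_sum fun e _ ↦ ?_
    by_cases he : e.2 = 0
    · simp [he]
    · simpa [he, lineTrace] using card_filter_smul_add_mem_and_le hUT e.1 he
  _ = _ := by simp [sq]

theorem exists_threeAPFree_mul_card_le {U T : Finset E}
    (hUT : ∀ u ∈ U, ∀ t, u - t ∈ U → u + t ∈ U → t ∈ T)
    (hT : 2 * Fintype.card F * #T ≤ Fintype.card E) :
    ∃ A : Finset F, ThreeAPFree (A : Set F) ∧
      Fintype.card F * #U ≤ 2 * Fintype.card E * #A := by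
  classical
  set q := Fintype.card F
  set N := Fintype.card E with hN
  have hBS : 2 * ∑ p, #(progressions (lineTrace F U p)) ≤ ∑ p, #(lineTrace F U p) := calc
    _ ≤ 2 * (q ^ 2 * (#U * #T)) := by gcongr; exact sum_card_progressions_lineTrace_le hUT
    _ = q * #U * (2 * q * #T) := by ring
    _ ≤ q * #U * N := by gcongr
    _ = _ := by rw [sum_card_lineTrace]; ring
  obtain ⟨p, hp⟩ := exists_sum_card_le_mul_card_sdiff_image _ _ Prod.fst hBS
  refine ⟨_, threeAPFree_sdiff_image_progressions (lineTrace F U p), ?_⟩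
  rw [sum_card_lineTrace, Fintype.card_prod, ← hN] at hp
  refine Nat.le_of_mul_le_mul_left ?_ (Fintype.card_pos : 0 < N)
  linarith

end Line

/-! ### Lattice points in a ball -/

section Lattice

theorem inv_one_add_sq_div_sq_le {a t : ℝ} (ha : 1 ≤ a) (ht : 0 ≤ t) :
    (1 + (t + 1) ^ 2 / a ^ 2)⁻¹ ≤ 2 * a ^ 2 * (1 / (a + t) - 1 / (a + (t + 1))) := by
  have hl : (1 + (t + 1) ^ 2 / a ^ 2)⁻¹ = a ^ 2 / (a ^ 2 + (t + 1) ^ 2) := by field_simp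
  have hr : 1 / (a + t) - 1 / (a + (t + 1)) = 1 / ((a + t) * (a + (t + 1))) := by
    field_simp
    ring
  have hden : (a + t) * (a + (t + 1)) ≤ 2 * (a ^ 2 + (t + 1) ^ 2) := by
    nlinarith [sq_nonneg (a - (t + 1))]
  rw [hl, hr, mul_one_div, div_le_div_iff₀ (by positivity) (by positivity)]
  nlinarith [sq_nonneg a]

theorem sum_Icc_inv_one_add_sq_div_sq_le {a : ℝ} (ha : 1 ≤ a) (R : ℕ) :
    ∑ t ∈ Icc (-R : ℤ) R, (1 + (t : ℝ) ^ 2 / a ^ 2)⁻¹ ≤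
      1 + 4 * a ^ 2 * (1 / a - 1 / (a + R)) := by
  induction R with
  | zero => simp
  | succ R ih =>
    have hIcc : Icc (-(R + 1 : ℕ) : ℤ) (R + 1 : ℕ) =
        insert (-(R + 1 : ℕ) : ℤ) (insert ((R + 1 : ℕ) : ℤ) (Icc (-R : ℤ) R)) := by
      ext t
      simp only [mem_Icc, mem_insert]
      omega
    rw [hIcc, sum_insert (by simp only [mem_insert, mem_Icc]; omega), sum_insert (by simp)]
    push_cast
    rw [neg_sq]
    linarith [inv_one_add_sq_div_sq_le ha R.cast_nonneg]

theorem sum_inv_one_add_sq_div_sq_le {a : ℝ} (ha : 1 ≤ a) (s : Finset ℤ) :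
    ∑ t ∈ s, (1 + (t : ℝ) ^ 2 / a ^ 2)⁻¹ ≤ 5 * a := by
  set R := s.sup Int.natAbs
  have hs : s ⊆ Icc (-R : ℤ) R := fun t ht ↦ by
    have : t.natAbs ≤ R := le_sup (f := Int.natAbs) ht
    rw [mem_Icc]
    omega
  have hR : 0 ≤ 4 * a ^ 2 * (1 / (a + R)) := by positivity
  have h4a : 4 * a ^ 2 * (1 / a) = 4 * a := by field_simp
  calc ∑ t ∈ s, (1 + (t : ℝ) ^ 2 / a ^ 2)⁻¹
      ≤ ∑ t ∈ Icc (-R : ℤ) R, (1 + (t : ℝ) ^ 2 / a ^ 2)⁻¹ :=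
        sum_le_sum_of_subset_of_nonneg hs fun _ _ _ ↦ by positivity
    _ ≤ 1 + 4 * a ^ 2 * (1 / a - 1 / (a + R)) := sum_Icc_inv_one_add_sq_div_sq_le ha R
    _ ≤ 5 * a := by linarith

variable {ι : Type*} [Fintype ι]

theorem prod_one_add_sq_div_sq_le {a : ℝ} {t : ι → ℝ} (ha : 0 < a)
    (ht : ∑ i, t i ^ 2 ≤ Fintype.card ι * a ^ 2) :
    ∏ i, (1 + t i ^ 2 / a ^ 2) ≤ 3 ^ Fintype.card ι := calc
  ∏ i, (1 + t i ^ 2 / a ^ 2) ≤ ∏ i, Real.exp (t i ^ 2 / a ^ 2) :=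
    prod_le_prod (fun _ _ ↦ by positivity) fun _ _ ↦ by
      rw [add_comm]; exact Real.add_one_le_exp _
  _ = Real.exp ((∑ i, t i ^ 2) / a ^ 2) := by rw [← Real.exp_sum, sum_div]
  _ ≤ Real.exp (Fintype.card ι * 1) := by
    rw [mul_one, Real.exp_le_exp]
    exact div_le_of_le_mul₀ (by positivity) (by positivity) ht
  _ = Real.exp 1 ^ Fintype.card ι := Real.exp_nat_mul _ _
  _ ≤ 3 ^ Fintype.card ι := by
    gcongr
    exact Real.exp_one_lt_three.le

/- Rankin's trick: the product weight `3 ^ d * ∏ i, (1 + t i ^ 2 / a ^ 2)⁻¹` is at least `1` on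
the ball, and its sum over a box factors into one-dimensional sums. -/
theorem card_le_of_forall_sum_sq_le {a : ℝ} (ha : 1 ≤ a) (T : Finset (ι → ℤ))
    (hT : ∀ t ∈ T, ∑ i, (t i : ℝ) ^ 2 ≤ Fintype.card ι * a ^ 2) :
    (#T : ℝ) ≤ (15 * a) ^ Fintype.card ι := by
  classical
  set d := Fintype.card ι
  let side (i : ι) : Finset ℤ := T.image (· i)
  set box := Fintype.piFinset side
  have hbox : T ⊆ box := fun t ht ↦ Fintype.mem_piFinset.2 fun i ↦ mem_image_of_mem (· i) ht
  have hweight (t : ι → ℤ) (ht : t ∈ T) : 1 ≤ 3 ^ d * ∏ i, (1 + (t i : ℝ) ^ 2 / a ^ 2)⁻¹ := by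
    rw [prod_inv_distrib, ← div_eq_mul_inv, one_le_div (prod_pos fun _ _ ↦ by positivity)]
    exact prod_one_add_sq_div_sq_le (by linarith) (hT t ht)
  calc (#T : ℝ) = ∑ t ∈ T, 1 := by simp
    _ ≤ ∑ t ∈ T, 3 ^ d * ∏ i, (1 + (t i : ℝ) ^ 2 / a ^ 2)⁻¹ := sum_le_sum hweight
    _ ≤ ∑ t ∈ box, 3 ^ d * ∏ i, (1 + (t i : ℝ) ^ 2 / a ^ 2)⁻¹ :=
      sum_le_sum_of_subset_of_nonneg hbox fun t _ _ ↦
        mul_nonneg (by positivity) (prod_nonneg fun _ _ ↦ by positivity)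
    _ = 3 ^ d * ∏ i, ∑ t ∈ side i, (1 + (t : ℝ) ^ 2 / a ^ 2)⁻¹ := by
      rw [← mul_sum, prod_univ_sum]
    _ ≤ 3 ^ d * ∏ _i : ι, (5 * a) := by
      gcongr with i
      exact sum_inv_one_add_sq_div_sq_le ha _
    _ = (15 * a) ^ d := by rw [prod_const, card_univ, ← mul_pow]; ring

end Lattice

/-! ### Thin shells -/

section Shell

theorem card_mul_sum_sq_sum_eq {α : Type*} [Fintype α] {f : α → ℝ} (hf : ∑ q, f q = 0) (D : ℕ) :
    Fintype.card α * ∑ x : Fin D → α, (∑ i, f (x i)) ^ 2 =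
      D * Fintype.card α ^ D * ∑ q, f q ^ 2 := by
  induction D with
  | zero => simp
  | succ D ih =>
    have hexpand (q : α) : ∑ x : Fin D → α, (f q + ∑ i, f (x i)) ^ 2 =
        Fintype.card α ^ D * f q ^ 2 + 2 * f q * ∑ x : Fin D → α, ∑ i, f (x i) +
          ∑ x : Fin D → α, (∑ i, f (x i)) ^ 2 := by
      simp only [add_sq, sum_add_distrib, ← mul_sum]
      simp
    rw [← (Fin.consEquiv fun _ : Fin (D + 1) ↦ α).sum_comp, Fintype.sum_prod_type]
    simp only [Fin.consEquiv, Equiv.coe_fn_mk, Fin.sum_univ_succ, Fin.cons_zero, Fin.cons_succ,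
      hexpand, sum_add_distrib, ← mul_sum, ← sum_mul, hf, sum_const, card_univ, nsmul_eq_mul]
    push_cast
    linear_combination (Fintype.card α : ℝ) * ih

theorem card_filter_lt_abs_mul_sq_le {β : Type*} (s : Finset β) (g : β → ℝ) {w : ℝ} (hw : 0 ≤ w) :
    #{x ∈ s | w < |g x|} * w ^ 2 ≤ ∑ x ∈ s, g x ^ 2 := calc
  #{x ∈ s | w < |g x|} * w ^ 2 = ∑ x ∈ s with w < |g x|, w ^ 2 := by simp
  _ ≤ ∑ x ∈ s with w < |g x|, g x ^ 2 := sum_le_sum fun x hx ↦ by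
    rw [← sq_abs (g x)]
    have := (mem_filter.1 hx).2
    gcongr
  _ ≤ ∑ x ∈ s, g x ^ 2 :=
    sum_le_sum_of_subset_of_nonneg (filter_subset _ _) fun _ _ _ ↦ sq_nonneg _

theorem exists_subset_abs_sub_lt {β : Type*} {s : Finset β} {g : β → ℝ} {w δ : ℝ}
    (hδ : 0 < δ) (hδw : δ ≤ w) (hs : ∀ x ∈ s, |g x| ≤ w) :
    ∃ U ⊆ s, (∀ u ∈ U, ∀ v ∈ U, |g u - g v| < δ) ∧ #s * δ ≤ 4 * w * #U := by
  have hwδ : 1 ≤ w / δ := (one_le_div hδ).2 hδw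
  set J := Icc ⌊-w / δ⌋ ⌊w / δ⌋
  have hmaps : ∀ x ∈ s, ⌊g x / δ⌋ ∈ J := fun x hx ↦ by
    obtain ⟨hl, hr⟩ := abs_le.1 (hs x hx)
    exact mem_Icc.2 ⟨Int.floor_le_floor (by gcongr), Int.floor_le_floor (by gcongr)⟩
  have hle : ⌊-w / δ⌋ ≤ ⌊w / δ⌋ := Int.floor_le_floor (by gcongr; linarith)
  have hJ : (#J : ℝ) ≤ 4 * (w / δ) := by
    have hcard : (#J : ℝ) = ⌊w / δ⌋ + 1 - ⌊-w / δ⌋ := by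
      exact_mod_cast Int.card_Icc_of_le _ _ (by omega)
    have hr := Int.floor_le (w / δ)
    have hl := Int.lt_floor_add_one (-w / δ)
    rw [neg_div] at hl
    rw [hcard, neg_div]
    linarith
  obtain ⟨j, -, hj⟩ : ∃ j ∈ J, #s / (4 * (w / δ)) ≤ #{x ∈ s | ⌊g x / δ⌋ = j} := by
    refine exists_le_card_fiber_of_nsmul_le_card_of_maps_to hmaps (nonempty_Icc.2 hle) ?_
    rw [nsmul_eq_mul, mul_div_left_comm]
    exact mul_le_of_le_one_right (by positivity) ((div_le_one (by positivity)).2 hJ)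
  refine ⟨{x ∈ s | ⌊g x / δ⌋ = j}, filter_subset _ _, fun u hu v hv ↦ ?_, ?_⟩
  · have := Int.abs_sub_lt_one_of_floor_eq_floor
      ((mem_filter.1 hu).2.trans (mem_filter.1 hv).2.symm)
    rwa [← sub_div, abs_div, abs_of_pos hδ, div_lt_one hδ] at this
  · rw [div_le_iff₀ (by positivity)] at hj
    calc #s * δ ≤ #{x ∈ s | ⌊g x / δ⌋ = j} * (4 * (w / δ)) * δ := by gcongr
      _ = 4 * w * #{x ∈ s | ⌊g x / δ⌋ = j} := by field_simp

variable {α : Type*} [Fintype α] [Nonempty α] {D : ℕ} {f : α → ℝ} {B : ℝ}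

theorem card_pow_le_card_filter_abs_sum_le (hf : ∑ q, f q = 0) (hB : 0 < B)
    (hfB : ∀ q, |f q| ≤ B) (hD : 0 < D) :
    3 * (Fintype.card α : ℝ) ^ D ≤ 4 * #{x : Fin D → α | |∑ i, f (x i)| ≤ 2 * B * √D} := by
  classical
  set N := (Fintype.card α : ℝ)
  have hN : 0 < N := Nat.cast_pos.2 Fintype.card_pos
  set w := 2 * B * √D
  have hw : w ^ 2 = 4 * B ^ 2 * D := by rw [mul_pow, Real.sq_sqrt D.cast_nonneg]; ring
  have hsq : ∑ q, f q ^ 2 ≤ N * B ^ 2 := calc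
    ∑ q, f q ^ 2 ≤ ∑ _q : α, B ^ 2 :=
      sum_le_sum fun q _ ↦ sq_le_sq.2 ((hfB q).trans (le_abs_self B))
    _ = N * B ^ 2 := by simp [N]
  have hvar : ∑ x : Fin D → α, (∑ i, f (x i)) ^ 2 ≤ D * N ^ D * B ^ 2 := by
    refine le_of_mul_le_mul_left ?_ hN
    calc N * ∑ x : Fin D → α, (∑ i, f (x i)) ^ 2
        = D * N ^ D * ∑ q, f q ^ 2 := card_mul_sum_sq_sum_eq hf D
      _ ≤ D * N ^ D * (N * B ^ 2) := by gcongr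
      _ = N * (D * N ^ D * B ^ 2) := by ring
  have hbad : 4 * (#{x : Fin D → α | w < |∑ i, f (x i)|} : ℝ) ≤ N ^ D := by
    have hcheb := (card_filter_lt_abs_mul_sq_le univ (fun x : Fin D → α ↦ ∑ i, f (x i))
      (by positivity : 0 ≤ w)).trans hvar
    rw [hw] at hcheb
    have : 0 < B ^ 2 * D := by positivity
    refine le_of_mul_le_mul_right ?_ this
    linarith
  have htotal : (#{x : Fin D → α | |∑ i, f (x i)| ≤ w} : ℝ) +
      #{x : Fin D → α | w < |∑ i, f (x i)|} = N ^ D := by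
    simp_rw [← not_le]
    rw [← Nat.cast_add, card_filter_add_card_filter_not]
    simp [N]
  linarith

theorem exists_finset_pi_abs_sum_sub_sum_lt (hf : ∀ q, 0 ≤ f q) (hfB : ∀ q, f q ≤ B)
    {δ : ℝ} (hδ : 0 < δ) (hδB : δ ≤ 2 * B * √D) :
    ∃ U : Finset (Fin D → α),
      (∀ u ∈ U, ∀ v ∈ U, |∑ i, f (u i) - ∑ i, f (v i)| < δ) ∧
      3 * Fintype.card α ^ D * δ ≤ 32 * B * √D * #U := by
  have hw : 0 < 2 * B * √D := hδ.trans_le hδB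
  have hD : 0 < √(D : ℝ) := (Real.sqrt_nonneg _).lt_of_ne' (right_ne_zero_of_mul hw.ne')
  have hB : 0 < B := by nlinarith
  set N := (Fintype.card α : ℝ)
  have hN : 0 < N := Nat.cast_pos.2 Fintype.card_pos
  set m := (∑ q, f q) / N
  have hm : m ≤ B := by
    rw [div_le_iff₀' hN, ← nsmul_eq_mul]
    exact sum_le_card_nsmul _ _ _ fun q _ ↦ hfB q
  have hm₀ : 0 ≤ m := div_nonneg (sum_nonneg fun q _ ↦ hf q) hN.le
  have hcentered : ∑ q, (f q - m) = 0 := by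
    rw [sum_sub_distrib, sum_const, card_univ, nsmul_eq_mul, mul_div_cancel₀ _ hN.ne', sub_self]
  have hconc := card_pow_le_card_filter_abs_sum_le hcentered hB
    (fun q ↦ abs_sub_le_of_nonneg_of_le (hf q) (hfB q) hm₀ hm) (Nat.cast_pos.1 (Real.sqrt_pos.1 hD))
  obtain ⟨U, -, hU, hcard⟩ := exists_subset_abs_sub_lt
    (s := {x : Fin D → α | |∑ i, (f (x i) - m)| ≤ 2 * B * √D})
    (g := fun x ↦ ∑ i, (f (x i) - m)) hδ hδB fun x hx ↦ (mem_filter.1 hx).2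
  refine ⟨U, fun u hu v hv ↦ ?_, ?_⟩
  · simpa only [sum_sub_distrib, sub_sub_sub_cancel_right] using hU u hu v hv
  · nlinarith

end Shell

/-! ### Dense progression-free sets modulo a prime -/

section GreenWolf

theorem eq_of_natCast_zmod_eq {M a b : ℕ} (ha : a < M) (hb : b < M) (h : (a : ZMod M) = b) :
    a = b := by
  rwa [ZMod.natCast_eq_natCast_iff', Nat.mod_eq_of_lt ha, Nat.mod_eq_of_lt hb] at h

theorem sum_sub_sq_lt_of_add_eq_two_mul {ι : Type*} [Fintype ι] {p r u : ι → ℝ} {δ : ℝ}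
    (hpr : ∀ i, p i + r i = 2 * u i) (hp : |∑ i, p i ^ 2 - ∑ i, u i ^ 2| < δ)
    (hr : |∑ i, r i ^ 2 - ∑ i, u i ^ 2| < δ) : ∑ i, (r i - u i) ^ 2 < δ := by
  have hpar : 2 * ∑ i, (r i - u i) ^ 2 = ∑ i, p i ^ 2 + ∑ i, r i ^ 2 - 2 * ∑ i, u i ^ 2 := by
    simp only [mul_sum, ← sum_add_distrib, ← sum_sub_distrib]
    refine sum_congr rfl fun i _ ↦ ?_
    rw [eq_sub_of_add_eq (hpr i)]
    ring
  linarith [(abs_lt.1 hp).2, (abs_lt.1 hr).2]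

/- Digits below `(M + 1) / 2` add without wrapping around modulo `M`. -/
theorem sum_sub_sq_lt_of_natCast_zmod_eq {ι : Type*} [Fintype ι] {M Q : ℕ} (hQ : 2 * Q ≤ M + 1)
    {p r u : ι → Fin Q} {t : ι → ZMod M} (hp : ∀ i, ((p i : ℕ) : ZMod M) = (u i : ℕ) - t i)
    (hr : ∀ i, ((r i : ℕ) : ZMod M) = (u i : ℕ) + t i) {δ : ℝ}
    (hpu : |∑ i, (p i : ℝ) ^ 2 - ∑ i, (u i : ℝ) ^ 2| < δ)
    (hru : |∑ i, (r i : ℝ) ^ 2 - ∑ i, (u i : ℝ) ^ 2| < δ) :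
    ∑ i, ((r i : ℝ) - u i) ^ 2 < δ := by
  have hmid (i : ι) : (p i + r i : ℕ) = 2 * u i := by
    refine eq_of_natCast_zmod_eq (M := M) (by omega) (by omega) ?_
    push_cast
    rw [hp i, hr i]
    ring
  exact sum_sub_sq_lt_of_add_eq_two_mul (fun i ↦ mod_cast hmid i) hpu hru

variable {M D : ℕ} [Fact M.Prime]

theorem exists_threeAPFree_of_abs_sum_sq_sub_lt {Q : ℕ} (hQ : 2 * Q ≤ M + 1) {a : ℝ} (ha : 1 ≤ a)
    (haM : 2 * M * (15 * a) ^ D ≤ (M : ℝ) ^ D) {U : Finset (Fin D → Fin Q)}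
    (hU : ∀ u ∈ U, ∀ v ∈ U, |∑ i, (u i : ℝ) ^ 2 - ∑ i, (v i : ℝ) ^ 2| < D * a ^ 2) :
    ∃ A : Finset (ZMod M), ThreeAPFree (A : Set (ZMod M)) ∧ M * #U ≤ 2 * M ^ D * #A := by
  let cast (u : Fin D → Fin Q) : Fin D → ZMod M := fun i ↦ ((u i : ℕ) : ZMod M)
  let diff (v : (Fin D → Fin Q) × (Fin D → Fin Q)) : Fin D → ℤ := fun i ↦ v.1 i - v.2 i
  let T : Finset (Fin D → ℤ) := {t ∈ (U ×ˢ U).image diff | ∑ i, (t i : ℝ) ^ 2 ≤ D * a ^ 2}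
  let T' : Finset (Fin D → ZMod M) := T.image fun t i ↦ (t i : ZMod M)
  have hM : 1 < M := (Fact.out : M.Prime).one_lt
  have hcast : cast.Injective := fun u v huv ↦ funext fun i ↦ Fin.ext <|
    eq_of_natCast_zmod_eq (by omega) (by omega) (congrFun huv i)
  have hT' : 2 * M * #T' ≤ M ^ D := by
    have hT : (#T : ℝ) ≤ (15 * a) ^ D := by
      simpa using card_le_of_forall_sum_sq_le ha T fun t ht ↦ by simpa using (mem_filter.1 ht).2
    have hT'T : (#T' : ℝ) ≤ #T := mod_cast card_image_le
    have : (2 * M * #T' : ℝ) ≤ M ^ D := le_trans (by gcongr; exact hT'T.trans hT) haM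
    exact_mod_cast this
  have hUT : ∀ u ∈ U.image cast, ∀ t, u - t ∈ U.image cast → u + t ∈ U.image cast → t ∈ T' := by
    simp only [mem_image]
    rintro - ⟨u, hu, rfl⟩ t ⟨p, hp, hpt⟩ ⟨r, hr, hrt⟩
    have hrt' (i : Fin D) : ((r i : ℕ) : ZMod M) = (u i : ℕ) + t i := congrFun hrt i
    have hshort : ∑ i, ((r i : ℝ) - u i) ^ 2 < D * a ^ 2 :=
      sum_sub_sq_lt_of_natCast_zmod_eq hQ (congrFun hpt) hrt' (hU p hp u hu) (hU r hr u hu)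
    refine mem_image.2 ⟨diff (r, u),
      mem_filter.2 ⟨mem_image_of_mem _ (mk_mem_product hr hu), ?_⟩, ?_⟩
    · simpa [diff] using hshort.le
    · ext i
      simp [diff, hrt' i]
  simpa [card_image_of_injective _ hcast] using
    exists_threeAPFree_mul_card_le (F := ZMod M) hUT (by simpa using hT')

theorem exists_finset_abs_sum_sq_sub_sum_sq_lt {Q : ℕ} (hQ : 0 < Q) {D : ℕ} (hD : 0 < D) {a : ℝ}
    (ha : 0 < a) (haQ : √D * a ^ 2 ≤ 2 * Q ^ 2) :
    ∃ U : Finset (Fin D → Fin Q),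
      (∀ u ∈ U, ∀ v ∈ U, |∑ i, (u i : ℝ) ^ 2 - ∑ i, (v i : ℝ) ^ 2| < D * a ^ 2) ∧
      3 * a ^ 2 * (√D * Q ^ D) ≤ 32 * Q ^ 2 * #U := by
  have : Nonempty (Fin Q) := ⟨⟨0, hQ⟩⟩
  have hsq : √(D : ℝ) * √D = D := Real.mul_self_sqrt D.cast_nonneg
  have hδ : D * a ^ 2 ≤ 2 * Q ^ 2 * √D := calc
    D * a ^ 2 = √D * a ^ 2 * √D := by rw [mul_right_comm, hsq]
    _ ≤ 2 * Q ^ 2 * √D := by gcongr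
  obtain ⟨U, hU, hcard⟩ := exists_finset_pi_abs_sum_sub_sum_lt
    (f := fun q : Fin Q ↦ (q : ℝ) ^ 2) (fun q ↦ by positivity)
    (fun q ↦ by gcongr; exact q.is_lt.le) (by positivity) hδ
  rw [Fintype.card_fin] at hcard
  refine ⟨U, hU, le_of_mul_le_mul_right ?_ (by positivity : 0 < √(D : ℝ))⟩
  calc 3 * a ^ 2 * (√D * Q ^ D) * √D = 3 * Q ^ D * (√D * √D * a ^ 2) := by ring
    _ ≤ 32 * Q ^ 2 * √D * #U := by rwa [hsq]
    _ = 32 * Q ^ 2 * #U * √D := by ring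

theorem exists_threeAPFree_of_pow_eq (hD : 0 < D) {ρ : ℝ} (hρ : 0 < ρ) (hρM : ρ ^ D = M)
    (hM : 30 * ρ ≤ M) (hDρ : √D ≤ 450 * ρ ^ 2) :
    ∃ A : Finset (ZMod M), ThreeAPFree (A : Set (ZMod M)) ∧
      √D * M ≤ 19200 * 2 ^ D * ρ ^ 2 * #A := by
  obtain ⟨Q, hMQ, hQM⟩ : ∃ Q, M ≤ 2 * Q ∧ 2 * Q ≤ M + 1 := ⟨(M + 1) / 2, by omega, by omega⟩
  have hM₁ : 1 < M := (Fact.out : M.Prime).one_lt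
  have hMQ' : (M : ℝ) ≤ 2 * Q := mod_cast hMQ
  have hQM' : (Q : ℝ) ≤ M := by exact_mod_cast (by omega : Q ≤ M)
  set a := M / (30 * ρ)
  have haM : a * (30 * ρ) = M := div_mul_cancel₀ _ (by positivity)
  have ha : 1 ≤ a := (one_le_div (by positivity)).2 hM
  have hball : 2 * M * (15 * a) ^ D ≤ (M : ℝ) ^ D := calc
    2 * M * (15 * a) ^ D ≤ 2 ^ D * M * (15 * a) ^ D := by
      gcongr
      exact le_self_pow₀ one_le_two hD.ne'
    _ = (a * (30 * ρ)) ^ D := by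
      rw [← hρM, mul_right_comm, ← mul_pow, ← mul_pow]
      ring
    _ = M ^ D := by rw [haM]
  have haQ : √D * a ^ 2 ≤ 2 * (Q : ℝ) ^ 2 := calc
    √D * a ^ 2 ≤ 450 * ρ ^ 2 * a ^ 2 := by gcongr
    _ = (M : ℝ) ^ 2 / 2 := by rw [← haM]; ring
    _ ≤ (2 * Q : ℝ) ^ 2 / 2 := by gcongr
    _ = 2 * (Q : ℝ) ^ 2 := by ring
  obtain ⟨U, hU, hUcard⟩ :=
    exists_finset_abs_sum_sq_sub_sum_sq_lt (by omega) hD (by positivity) haQ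
  obtain ⟨A, hA, hAcard⟩ := exists_threeAPFree_of_abs_sum_sq_sub_lt hQM ha hball hU
  have hAcard' : (M * #U : ℝ) ≤ 2 * M ^ D * #A := mod_cast hAcard
  have hUcard' : √D * Q ^ D ≤ 9600 * ρ ^ 2 * #U := by
    refine le_of_mul_le_mul_left (hUcard.trans ?_) (by positivity : 0 < 3 * a ^ 2)
    calc (32 * Q ^ 2 * #U : ℝ) ≤ 32 * M ^ 2 * #U := by gcongr
      _ = 3 * a ^ 2 * (9600 * ρ ^ 2 * #U) := by rw [← haM]; ring
  refine ⟨A, hA, le_of_mul_le_mul_right ?_ (by positivity : 0 < (M : ℝ) ^ D)⟩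
  calc √D * M * M ^ D ≤ √D * M * (2 * Q) ^ D := by gcongr
    _ = 2 ^ D * M * (√D * Q ^ D) := by ring
    _ ≤ 2 ^ D * M * (9600 * ρ ^ 2 * #U) := by gcongr
    _ = 9600 * 2 ^ D * ρ ^ 2 * (M * #U) := by ring
    _ ≤ 9600 * 2 ^ D * ρ ^ 2 * (2 * M ^ D * #A) := by gcongr
    _ = 19200 * 2 ^ D * ρ ^ 2 * #A * M ^ D := by ring

/- For `ρ ^ D = M = 2 ^ L` the loss `2 ^ D * ρ ^ 2` is `2 ^ (D + 2 * L / D)`, minimal at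
`D = √(2 * L)`. -/
theorem exists_nat_add_two_mul_div_le {L : ℝ} (hL : 200 ≤ L) :
    ∃ D : ℕ, √(2 * L) ≤ D ∧ 5 ≤ L / D ∧ D ≤ 8 * (L / D) ∧ D + 2 * (L / D) ≤ √(8 * L) + 1 := by
  set s := √(2 * L)
  have hs : s ^ 2 = 2 * L := Real.sq_sqrt (by linarith)
  have hs20 : 20 ≤ s := Real.le_sqrt_of_sq_le (by linarith)
  have h8L : √(8 * L) = 2 * s := by
    rw [show 8 * L = 2 ^ 2 * (2 * L) by ring, Real.sqrt_mul (by norm_num), Real.sqrt_sq zero_le_two]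
  have hsD : s ≤ ⌈s⌉₊ := Nat.le_ceil s
  have hDs : ⌈s⌉₊ < s + 1 := Nat.ceil_lt_add_one (by linarith)
  have hD : (0 : ℝ) < ⌈s⌉₊ := by linarith
  have hLD : L / ⌈s⌉₊ ≤ s / 2 := (div_le_iff₀ hD).2 (by nlinarith)
  refine ⟨⌈s⌉₊, hsD, (le_div_iff₀ hD).2 (by nlinarith), ?_, by linarith⟩
  rw [← mul_div_assoc, le_div_iff₀ hD]
  nlinarith

theorem sqrt_le_four_mul_two_rpow {x y : ℝ} (hx : 1 ≤ x) (hy : 1 ≤ y) (hxy : x ≤ 4 * y) :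
    √x ≤ 4 * 2 ^ y := by
  have hbernoulli : 1 + y * 1 ≤ (1 + 1) ^ y := one_add_mul_self_le_rpow_one_add (by norm_num) hy
  rw [one_add_one_eq_two] at hbernoulli
  have hsqrt : √x ≤ x := Real.sqrt_le_iff.2 ⟨by linarith, le_self_pow₀ hx two_ne_zero⟩
  linarith

theorem rpow_one_div_four_eq_sqrt_sqrt {x : ℝ} (hx : 0 ≤ x) : x ^ (1 / 4 : ℝ) = √√x := by
  rw [Real.sqrt_eq_rpow, Real.sqrt_eq_rpow, ← Real.rpow_mul hx]
  norm_num

theorem exists_threeAPFree_rpow_mul_le {L : ℝ} (hL : 200 ≤ L) (hLM : (2 : ℝ) ^ L = M) :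
    ∃ A : Finset (ZMod M), ThreeAPFree (A : Set (ZMod M)) ∧
      L ^ (1 / 4 : ℝ) * M ≤ 38400 * 2 ^ √(8 * L) * #A := by
  obtain ⟨D, hLD, hy5, hDy, hDL⟩ := exists_nat_add_two_mul_div_le hL
  have hD₀ : (0 : ℝ) < D := (Real.sqrt_pos.2 (by linarith)).trans_le hLD
  have hD2 : 2 ≤ D := by
    exact_mod_cast (Real.le_sqrt_of_sq_le (by linarith) : (2 : ℝ) ≤ √(2 * L)).trans hLD
  set y := L / D
  set ρ : ℝ := 2 ^ y
  have hρ32 : 32 ≤ ρ := calc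
    (32 : ℝ) = 2 ^ (5 : ℝ) := by norm_num
    _ ≤ 2 ^ y := Real.rpow_le_rpow_of_exponent_le one_le_two hy5
  have hρM : ρ ^ D = M := by
    rw [← Real.rpow_mul_natCast zero_le_two, div_mul_cancel₀ _ hD₀.ne', hLM]
  have hρ30 : 30 * ρ ≤ M := calc
    30 * ρ ≤ ρ ^ 2 := by nlinarith
    _ ≤ ρ ^ D := pow_le_pow_right₀ (by linarith) hD2
    _ = M := hρM
  have hρsq : ρ ^ 2 = 2 ^ (2 * y) := by
    rw [mul_comm, ← Real.rpow_mul_natCast zero_le_two, Nat.cast_ofNat]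
  have hDρ : √D ≤ 450 * ρ ^ 2 := calc
    √D ≤ 4 * 2 ^ (2 * y) :=
      sqrt_le_four_mul_two_rpow (by exact_mod_cast one_le_two.trans hD2) (by linarith)
        (by linarith)
    _ = 4 * ρ ^ 2 := by rw [hρsq]
    _ ≤ 450 * ρ ^ 2 := by gcongr; norm_num
  obtain ⟨A, hA, hcard⟩ := exists_threeAPFree_of_pow_eq (by omega) (by linarith) hρM hρ30 hDρ
  have hroot : L ^ (1 / 4 : ℝ) ≤ √D := calc
    L ^ (1 / 4 : ℝ) = √√L := rpow_one_div_four_eq_sqrt_sqrt (by linarith)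
    _ ≤ √D := Real.sqrt_le_sqrt ((Real.sqrt_le_sqrt (by linarith)).trans hLD)
  have hexp : 2 ^ D * ρ ^ 2 ≤ 2 * 2 ^ √(8 * L) := by
    rw [hρsq, ← Real.rpow_natCast, ← Real.rpow_add two_pos, mul_comm 2 (2 ^ _),
      ← Real.rpow_add_one two_ne_zero]
    exact Real.rpow_le_rpow_of_exponent_le one_le_two hDL
  refine ⟨A, hA, ?_⟩
  calc L ^ (1 / 4 : ℝ) * M ≤ √D * M := by gcongr
    _ ≤ 19200 * 2 ^ D * ρ ^ 2 * #A := hcard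
    _ = 19200 * (2 ^ D * ρ ^ 2) * #A := by ring
    _ ≤ 19200 * (2 * 2 ^ √(8 * L)) * #A := by gcongr
    _ = 38400 * 2 ^ √(8 * L) * #A := by ring

end GreenWolf

/-! ### Pairs of disjoint sets -/

section DisjointPairs

variable {V : Type*} [DecidableEq V]

/-- The characteristic vector over `𝔽₂` of a finite set. -/
def charVec (x : Finset V) : V → ZMod 2 := fun i ↦ if i ∈ x then 1 else 0

theorem charVec_add_add_eq_zero_iff {x y z : Finset V} :
    charVec x + charVec y + charVec z = 0 ↔ z = symmDiff x y := by
  rw [funext_iff, Finset.ext_iff]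
  refine forall_congr' fun i ↦ ?_
  simp only [charVec, Pi.add_apply, Pi.zero_apply, mem_symmDiff]
  by_cases hx : i ∈ x <;> by_cases hy : i ∈ y <;> by_cases hz : i ∈ z <;>
    simp only [hx, hy, hz, if_true, if_false] <;> decide

theorem charVec_add_add_eq_zero_iff_of_card {x y z : Finset V} (hz : #z = #x + #y) :
    charVec x + charVec y + charVec z = 0 ↔ Disjoint x y ∧ z = x ∪ y := by
  rw [charVec_add_add_eq_zero_iff]
  constructor
  · rintro rfl
    have hsub : symmDiff x y ⊆ x ∪ y := symmDiff_le_sup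
    have hunion : symmDiff x y = x ∪ y := eq_of_subset_of_card_le hsub (hz ▸ card_union_le x y)
    exact ⟨(symmDiff_eq_sup _ _).1 hunion, hunion⟩
  · rintro ⟨hxy, rfl⟩
    exact ((symmDiff_eq_sup _ _).2 hxy).symm

/-- Two pairs of sets conflict if they are distinct but agree in one of the three sets
`p.1`, `p.2`, `p.1 ∪ p.2`. -/
def Conflict (p q : Finset V × Finset V) : Prop :=
  p ≠ q ∧ (p.1 = q.1 ∨ p.2 = q.2 ∨ p.1 ∪ p.2 = q.1 ∪ q.2)

variable [Fintype V] {k l : ℕ} {p q : Finset V × Finset V}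

/-- The pairs of disjoint subsets of `V` of sizes `k` and `l`. -/
def disjointPairs (V : Type*) [DecidableEq V] [Fintype V] (k l : ℕ) :
    Finset (Finset V × Finset V) := {p | #p.1 = k ∧ #p.2 = l ∧ Disjoint p.1 p.2}

theorem mem_disjointPairs :
    p ∈ disjointPairs V k l ↔ #p.1 = k ∧ #p.2 = l ∧ Disjoint p.1 p.2 := by
  simp [disjointPairs]

theorem card_disjointPairs_filter_fst_eq {x : Finset V} (hx : #x = k) :
    #{p ∈ disjointPairs V k l | p.1 = x} = (Fintype.card V - k).choose l := by
  rw [← hx, ← card_compl, ← card_powersetCard]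
  refine card_nbij' Prod.snd (fun y ↦ (x, y)) (fun p hp ↦ ?_) (fun y hy ↦ ?_) (fun p hp ↦ ?_)
    fun y _ ↦ rfl
  · obtain ⟨hp, rfl⟩ := mem_filter.1 hp
    obtain ⟨-, hl, hdisj⟩ := mem_disjointPairs.1 hp
    exact mem_powersetCard.2 ⟨subset_compl_iff_disjoint_left.2 hdisj, hl⟩
  · obtain ⟨hxy, hl⟩ := mem_powersetCard.1 hy
    exact mem_filter.2 ⟨mem_disjointPairs.2 ⟨rfl, hl, subset_compl_iff_disjoint_left.1 hxy⟩, rfl⟩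
  · exact Prod.ext (mem_filter.1 hp).2.symm rfl

theorem card_disjointPairs_filter_snd_eq {y : Finset V} (hy : #y = l) :
    #{p ∈ disjointPairs V k l | p.2 = y} = (Fintype.card V - l).choose k := by
  rw [← card_disjointPairs_filter_fst_eq hy]
  exact card_equiv (Equiv.prodComm _ _) (by simp [mem_disjointPairs, disjoint_comm, and_left_comm])

theorem card_disjointPairs_filter_union_eq_le (z : Finset V) :
    #{p ∈ disjointPairs V k l | p.1 ∪ p.2 = z} ≤ (#z).choose k := by
  rw [← card_powersetCard]
  refine card_le_card_of_injOn Prod.fst (fun p hp ↦ ?_) fun p hp q hq hpq ↦ Prod.ext hpq ?_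
  · obtain ⟨hp', rfl⟩ := mem_filter.1 hp
    exact mem_powersetCard.2 ⟨subset_union_left, (mem_disjointPairs.1 hp').1⟩
  · obtain ⟨hp, hpz⟩ := mem_filter.1 hp
    obtain ⟨hq, hqz⟩ := mem_filter.1 hq
    rw [← union_sdiff_cancel_left (mem_disjointPairs.1 hp).2.2,
      ← union_sdiff_cancel_left (mem_disjointPairs.1 hq).2.2, hpz, hqz, hpq]

theorem card_disjointPairs :
    #(disjointPairs V k l) = (Fintype.card V).choose k * (Fintype.card V - k).choose l := calc
  _ = ∑ x ∈ powersetCard k univ, #{p ∈ disjointPairs V k l | p.1 = x} :=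
    card_eq_sum_card_fiberwise fun _ hp ↦
      mem_powersetCard.2 ⟨subset_univ _, (mem_disjointPairs.1 hp).1⟩
  _ = ∑ _x ∈ powersetCard k (univ : Finset V), (Fintype.card V - k).choose l :=
    sum_congr rfl fun _ hx ↦ card_disjointPairs_filter_fst_eq (mem_powersetCard.1 hx).2
  _ = _ := by simp

open scoped Classical in
theorem card_disjointPairs_filter_conflict_le (hp : p ∈ disjointPairs V k l) :
    #{q ∈ disjointPairs V k l | Conflict p q} ≤
      (Fintype.card V - k).choose l + (Fintype.card V - l).choose k + (k + l).choose k := by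
  obtain ⟨hk, hl, hdisj⟩ := mem_disjointPairs.1 hp
  have hsub : {q ∈ disjointPairs V k l | Conflict p q} ⊆
      {q ∈ disjointPairs V k l | q.1 = p.1} ∪ {q ∈ disjointPairs V k l | q.2 = p.2} ∪
        {q ∈ disjointPairs V k l | q.1 ∪ q.2 = p.1 ∪ p.2} := fun q hq ↦ by
    obtain ⟨hq, -, hpq⟩ := mem_filter.1 hq
    simp only [mem_union, mem_filter, hq, true_and, or_assoc]
    exact hpq.imp Eq.symm (.imp Eq.symm Eq.symm)
  refine (card_le_card hsub).trans <| (card_union_le _ _).trans <|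
    add_le_add ((card_union_le _ _).trans (add_le_add ?_ ?_)) ?_
  · exact (card_disjointPairs_filter_fst_eq hk).le
  · exact (card_disjointPairs_filter_snd_eq hl).le
  · rw [← hk, ← hl, ← card_union_of_disjoint hdisj]
    exact card_disjointPairs_filter_union_eq_le _

end DisjointPairs

/-! ### Random hashing -/

section Hashing

variable {V G : Type*} [AddCommGroup G] {A : Finset G} {k l : ℕ}
  {ω : (V → G) × G × G} {p q : Finset V × Finset V}

/-- The pair `p` is hashed into `A` by the weights and offsets `ω = (w, α, β)` if the hash values
`α + w(p.1)` and `β + w(p.2)` agree and lie in `A`. -/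
def IsHashed (A : Finset G) (ω : (V → G) × G × G) (p : Finset V × Finset V) : Prop :=
  ω.2.1 + ∑ i ∈ p.1, ω.1 i ∈ A ∧ ω.2.1 + ∑ i ∈ p.1, ω.1 i = ω.2.2 + ∑ i ∈ p.2, ω.1 i

open scoped Classical in
theorem card_filter_isHashed [Fintype G] (W : Finset (V → G)) (p : Finset V × Finset V) :
    #{ω ∈ W ×ˢ (univ : Finset (G × G)) | IsHashed A ω p} = #W * #A := by
  rw [← card_product]
  refine card_nbij' (fun ω ↦ (ω.1, ω.2.1 + ∑ i ∈ p.1, ω.1 i))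
    (fun e ↦ (e.1, e.2 - ∑ i ∈ p.1, e.1 i, e.2 - ∑ i ∈ p.2, e.1 i))
    (fun ω hω ↦ ?_) (fun e he ↦ ?_) (fun ω hω ↦ ?_) (fun e _ ↦ ?_)
  · obtain ⟨hω, hA, -⟩ := mem_filter.1 hω
    exact mem_product.2 ⟨(mem_product.1 hω).1, hA⟩
  · obtain ⟨hW, hA⟩ := mem_product.1 he
    exact mem_filter.2 ⟨mem_product.2 ⟨hW, mem_univ _⟩, by simpa [IsHashed] using hA⟩
  · obtain ⟨-, -, hω⟩ := mem_filter.1 hω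
    exact Prod.ext rfl (Prod.ext (add_sub_cancel_right _ _) (sub_eq_of_eq_add hω))
  · exact Prod.ext rfl (sub_add_cancel _ _)

variable [DecidableEq V]

theorem IsHashed.add_self_eq (hp : IsHashed A ω p) (hdisj : Disjoint p.1 p.2) :
    (ω.2.1 + ∑ i ∈ p.1, ω.1 i) + (ω.2.1 + ∑ i ∈ p.1, ω.1 i) =
      ω.2.1 + ω.2.2 + ∑ i ∈ p.1 ∪ p.2, ω.1 i := by
  rw [sum_union hdisj]
  nth_rewrite 2 [hp.2]
  abel

theorem IsHashed.sum_eq_sum_of_conflict (hA : ThreeAPFree (A : Set G)) (hp : IsHashed A ω p)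
    (hq : IsHashed A ω q) (hpd : Disjoint p.1 p.2) (hqd : Disjoint q.1 q.2)
    (hpq : Conflict p q) :
    ∑ i ∈ p.1, ω.1 i = ∑ i ∈ q.1, ω.1 i ∧ ∑ i ∈ p.2, ω.1 i = ∑ i ∈ q.2, ω.1 i := by
  have hiff : ∑ i ∈ p.1, ω.1 i = ∑ i ∈ q.1, ω.1 i ↔ ∑ i ∈ p.2, ω.1 i = ∑ i ∈ q.2, ω.1 i := by
    rw [← add_right_inj ω.2.1, hp.2, hq.2, add_right_inj]
  obtain h | h | h := hpq.2
  · exact ⟨by rw [h], hiff.1 (by rw [h])⟩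
  · exact ⟨hiff.2 (by rw [h]), by rw [h]⟩
  · have := hA hp.1 hq.1 hp.1 (by rw [hp.add_self_eq hpd, hq.add_self_eq hqd, h])
    exact ⟨add_left_cancel this, hiff.1 (add_left_cancel this)⟩

theorem IsHashed.of_union_eq (hA : ThreeAPFree (A : Set G)) {r : Finset V × Finset V}
    (hp : IsHashed A ω p) (hq : IsHashed A ω q) (hr : IsHashed A ω r)
    (hrd : Disjoint r.1 r.2) (hpq : Disjoint p.1 q.2) (hpqr : r.1 ∪ r.2 = p.1 ∪ q.2) :
    IsHashed A ω (p.1, q.2) := by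
  have hap : (ω.2.1 + ∑ i ∈ p.1, ω.1 i) + (ω.2.2 + ∑ i ∈ q.2, ω.1 i) =
      (ω.2.1 + ∑ i ∈ r.1, ω.1 i) + (ω.2.1 + ∑ i ∈ r.1, ω.1 i) := by
    rw [hr.add_self_eq hrd, hpqr, sum_union hpq]
    abel
  have hq' : ω.2.2 + ∑ i ∈ q.2, ω.1 i ∈ A := hq.2 ▸ hq.1
  refine ⟨hp.1, (hA hp.1 hr.1 hq' hap).trans (hA hq' hr.1 hp.1 ?_).symm⟩
  rw [add_comm, hap]

theorem isTricoloredSumFree_of_isHashed (hA : ThreeAPFree (A : Set G)) [Fintype V]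
    {S : Finset (Finset V × Finset V)} (hS : ∀ p ∈ S, p ∈ disjointPairs V k l ∧ IsHashed A ω p)
    (hS' : ∀ p ∈ S, ∀ q ∈ disjointPairs V k l, IsHashed A ω q → ¬Conflict p q) :
    IsTricoloredSumFree (fun p : S ↦ charVec p.1.1) (fun p ↦ charVec p.1.2)
      (fun p ↦ charVec (p.1.1 ∪ p.1.2)) := by
  rintro ⟨p, hpS⟩ ⟨q, hqS⟩ ⟨r, hrS⟩
  obtain ⟨hp, hpA⟩ := hS p hpS
  obtain ⟨hq, hqA⟩ := hS q hqS
  obtain ⟨hr, hrA⟩ := hS r hrS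
  obtain ⟨hpk, -, hpd⟩ := mem_disjointPairs.1 hp
  obtain ⟨-, hql, -⟩ := mem_disjointPairs.1 hq
  obtain ⟨hrk, hrl, hrd⟩ := mem_disjointPairs.1 hr
  simp only [Subtype.mk.injEq]
  rw [charVec_add_add_eq_zero_iff_of_card
    (by rw [card_union_of_disjoint hrd, hrk, hrl, hpk, hql])]
  constructor
  · rintro ⟨hdisj, hunion⟩
    have hpq : (p.1, q.2) ∈ disjointPairs V k l := mem_disjointPairs.2 ⟨hpk, hql, hdisj⟩
    have hpqA : IsHashed A ω (p.1, q.2) := hpA.of_union_eq hA hqA hrA hrd hdisj hunion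
    have eq_of_agree {s} (hs : s ∈ S)
        (h : s.1 = p.1 ∨ s.2 = q.2 ∨ s.1 ∪ s.2 = p.1 ∪ q.2) : s = (p.1, q.2) :=
      not_not.1 fun hne ↦ hS' s hs _ hpq hpqA ⟨hne, h⟩
    have hq_eq := eq_of_agree hqS (.inr (.inl rfl))
    exact ⟨(eq_of_agree hpS (.inl rfl)).trans hq_eq.symm,
      hq_eq.trans (eq_of_agree hrS (.inr (.inr hunion))).symm⟩
  · rintro ⟨rfl, rfl⟩
    exact ⟨hpd, rfl⟩

variable [Fintype V] [Fintype G]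

open scoped Classical in
theorem card_mul_card_filter_sum_eq_sum_le {x y : Finset V} (hxy : x ≠ y) :
    Fintype.card G * #{w : V → G | ∑ i ∈ x, w i = ∑ i ∈ y, w i} ≤
      Fintype.card G ^ Fintype.card V := by
  wlog hi : ∃ i ∈ x, i ∉ y generalizing x y
  · simp_rw [eq_comm (a := Finset.sum x _)]
    push Not at hi
    exact this hxy.symm (exists_of_ssubset (ssubset_of_subset_of_ne hi hxy))
  obtain ⟨i, hix, hiy⟩ := hi
  rw [← Fintype.card_fun, ← card_univ, ← card_univ, ← card_product]
  refine card_le_card_of_injOn (fun e ↦ e.2 + Pi.single i e.1) (fun _ _ ↦ mem_univ _) ?_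
  rintro ⟨g, w⟩ hw ⟨g', w'⟩ hw' h
  have hx := congr(∑ j ∈ x, $h j)
  have hy := congr(∑ j ∈ y, $h j)
  have hw : ∑ j ∈ x, w j = ∑ j ∈ y, w j := (mem_filter.1 (mem_product.1 hw).2).2
  have hw' : ∑ j ∈ x, w' j = ∑ j ∈ y, w' j := (mem_filter.1 (mem_product.1 hw').2).2
  simp only [Pi.add_apply, sum_add_distrib, sum_pi_single', hix, hiy, if_true, if_false,
    add_zero] at hx hy
  obtain rfl : g = g' := by
    rw [hw, hw', hy] at hx
    exact add_left_cancel hx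
  exact Prod.ext rfl (add_right_cancel h)

open scoped Classical in
theorem card_mul_card_filter_isHashed_and_le (hA : ThreeAPFree (A : Set G))
    (hp : p ∈ disjointPairs V k l) (hq : q ∈ disjointPairs V k l) (hpq : Conflict p q) :
    Fintype.card G * #{ω | IsHashed A ω p ∧ IsHashed A ω q} ≤
      Fintype.card G ^ Fintype.card V * #A := by
  obtain ⟨x, y, hxy, hsum⟩ : ∃ x y : Finset V, x ≠ y ∧
      ∀ ω, IsHashed A ω p ∧ IsHashed A ω q → ∑ i ∈ x, ω.1 i = ∑ i ∈ y, ω.1 i := by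
    have hsum (ω : (V → G) × G × G) (h : IsHashed A ω p ∧ IsHashed A ω q) :=
      h.1.sum_eq_sum_of_conflict hA h.2 (mem_disjointPairs.1 hp).2.2
        (mem_disjointPairs.1 hq).2.2 hpq
    by_cases h : p.1 = q.1
    · exact ⟨p.2, q.2, fun h' ↦ hpq.1 (Prod.ext h h'), fun ω hω ↦ (hsum ω hω).2⟩
    · exact ⟨p.1, q.1, h, fun ω hω ↦ (hsum ω hω).1⟩
  set W : Finset (V → G) := {w | ∑ i ∈ x, w i = ∑ i ∈ y, w i}
  have hsub : ({ω | IsHashed A ω p ∧ IsHashed A ω q} : Finset ((V → G) × G × G)) ⊆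
      {ω ∈ W ×ˢ (univ : Finset (G × G)) | IsHashed A ω p} := fun ω hω ↦ by
    have hω := (mem_filter.1 hω).2
    exact mem_filter.2 ⟨mem_product.2 ⟨mem_filter.2 ⟨mem_univ _, hsum ω hω⟩, mem_univ _⟩, hω.1⟩
  calc _ ≤ Fintype.card G * (#W * #A) := by
        gcongr
        exact (card_le_card hsub).trans_eq (card_filter_isHashed W p)
    _ = Fintype.card G * #W * #A := (mul_assoc ..).symm
    _ ≤ _ := by
      gcongr
      exact card_mul_card_filter_sum_eq_sum_le hxy

open scoped Classical in
/-- The pairs in `disjointPairs V k l` hashed into `A` by `ω`. -/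
noncomputable def hashedPairs (A : Finset G) (k l : ℕ) (ω : (V → G) × G × G) :
    Finset (Finset V × Finset V) := {p ∈ disjointPairs V k l | IsHashed A ω p}

open scoped Classical in
/-- The conflicting pairs of elements of `hashedPairs A k l ω`. -/
noncomputable def hashedConflicts (A : Finset G) (k l : ℕ) (ω : (V → G) × G × G) :
    Finset ((Finset V × Finset V) × (Finset V × Finset V)) :=
  {e ∈ hashedPairs A k l ω ×ˢ hashedPairs A k l ω | Conflict e.1 e.2}

theorem sum_card_hashedPairs :
    ∑ ω : (V → G) × G × G, #(hashedPairs A k l ω) =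
      #(disjointPairs V k l) * (Fintype.card G ^ Fintype.card V * #A) := by
  classical
  calc _ = ∑ p ∈ disjointPairs V k l, #{ω : (V → G) × G × G | IsHashed A ω p} :=
        sum_card_bipartiteAbove_eq_sum_card_bipartiteBelow _
    _ = _ := by
      simp_rw [← univ_product_univ (α := V → G), card_filter_isHashed]
      simp

theorem card_mul_sum_card_hashedConflicts_le (hA : ThreeAPFree (A : Set G)) :
    Fintype.card G * ∑ ω : (V → G) × G × G, #(hashedConflicts A k l ω) ≤
      ((Fintype.card V - k).choose l + (Fintype.card V - l).choose k + (k + l).choose k) *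
        ∑ ω : (V → G) × G × G, #(hashedPairs A k l ω) := by
  classical
  set P := disjointPairs V k l
  set c := (Fintype.card V - k).choose l + (Fintype.card V - l).choose k + (k + l).choose k
  have hswap : ∑ ω : (V → G) × G × G, #(hashedConflicts A k l ω) =
      ∑ e ∈ P ×ˢ P with Conflict e.1 e.2,
        #{ω : (V → G) × G × G | IsHashed A ω e.1 ∧ IsHashed A ω e.2} := calc
    _ = ∑ ω : (V → G) × G × G, #{e ∈ {e ∈ P ×ˢ P | Conflict e.1 e.2} |
        IsHashed A ω e.1 ∧ IsHashed A ω e.2} := by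
      simp_rw [hashedConflicts, hashedPairs, ← filter_product, filter_filter, and_comm, P]
    _ = _ := sum_card_bipartiteAbove_eq_sum_card_bipartiteBelow _
  have hcard : #{e ∈ P ×ˢ P | Conflict e.1 e.2} ≤ c * #P := calc
    _ = ∑ p ∈ P, #{q ∈ P | Conflict p q} := by
      simp_rw [card_filter, sum_product]
    _ ≤ #P * c := sum_le_card_nsmul _ _ _ fun p hp ↦ card_disjointPairs_filter_conflict_le hp
    _ = c * #P := mul_comm ..
  rw [hswap, sum_card_hashedPairs, mul_sum, ← mul_assoc]
  refine (sum_le_card_nsmul _ _ _ fun e he ↦ ?_).trans (Nat.mul_le_mul_right _ hcard)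
  obtain ⟨he, hconf⟩ := mem_filter.1 he
  exact card_mul_card_filter_isHashed_and_le hA (mem_product.1 he).1 (mem_product.1 he).2 hconf

theorem exists_isTricoloredSumFree_charVec (hA : ThreeAPFree (A : Set G))
    (hG : 2 * ((Fintype.card V - k).choose l + (Fintype.card V - l).choose k +
      (k + l).choose k) ≤ Fintype.card G) :
    ∃ S : Finset (Finset V × Finset V),
      IsTricoloredSumFree (fun p : S ↦ charVec p.1.1) (fun p ↦ charVec p.1.2)
        (fun p ↦ charVec (p.1.1 ∪ p.1.2)) ∧
      #(disjointPairs V k l) * #A ≤ 2 * Fintype.card G ^ 2 * #S := by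
  classical
  have hq : 0 < Fintype.card G := Fintype.card_pos
  have hBS : 2 * ∑ ω : (V → G) × G × G, #(hashedConflicts A k l ω) ≤
      ∑ ω : (V → G) × G × G, #(hashedPairs A k l ω) := by
    refine Nat.le_of_mul_le_mul_left ?_ hq
    rw [mul_left_comm]
    refine (Nat.mul_le_mul_left 2 (card_mul_sum_card_hashedConflicts_le hA)).trans ?_
    rw [← mul_assoc]
    exact Nat.mul_le_mul_right _ hG
  obtain ⟨ω, hω⟩ := exists_sum_card_le_mul_card_sdiff_image _ _ Prod.fst hBS
  refine ⟨_, isTricoloredSumFree_of_isHashed hA (k := k) (l := l) (ω := ω)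
    (S := hashedPairs A k l ω \ (hashedConflicts A k l ω).image Prod.fst)
    (fun p hp ↦ mem_filter.1 (mem_sdiff.1 hp).1) fun p hp q hq hqA hpq ↦ ?_, ?_⟩
  · obtain ⟨hp, hp'⟩ := mem_sdiff.1 hp
    exact hp' (mem_image.2 ⟨(p, q), mem_filter.2
      ⟨mem_product.2 ⟨hp, mem_filter.2 ⟨hq, hqA⟩⟩, hpq⟩, rfl⟩)
  · rw [sum_card_hashedPairs, Fintype.card_prod, Fintype.card_prod, Fintype.card_fun] at hω
    refine Nat.le_of_mul_le_mul_left ?_ (pow_pos hq (Fintype.card V))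
    linarith

end Hashing

/-! ### Choice of parameters -/

theorem IsTricoloredSumFree.comp_injective {ι κ G : Type*} [AddMonoid G] {a b c : ι → G}
    (h : IsTricoloredSumFree a b c) {f : κ → ι} (hf : f.Injective) :
    IsTricoloredSumFree (a ∘ f) (b ∘ f) (c ∘ f) := fun i j k ↦ by
  simpa only [Function.comp_apply, hf.eq_iff] using h (f i) (f j) (f k)

theorem two_pow_le_centralBinom (k : ℕ) : 2 ^ k ≤ k.centralBinom := by
  induction k with
  | zero => simp
  | succ k ih =>
    refine Nat.le_of_mul_le_mul_left ?_ k.succ_pos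
    rw [Nat.succ_mul_centralBinom_succ, pow_succ]
    nlinarith

theorem exists_isTricoloredSumFree_of_threeAPFree {k M : ℕ} [NeZero M]
    (hM : 6 * k.centralBinom ≤ M) (hM' : M ≤ 12 * k.centralBinom) {A : Finset (ZMod M)}
    (hA : ThreeAPFree (A : Set (ZMod M))) :
    ∃ (m : ℕ) (a b c : Fin m → Fin (3 * k) → ZMod 2), IsTricoloredSumFree a b c ∧
      (3 * k).choose k * #A ≤ 24 * M * m := by
  have hchoose : (3 * k - k).choose k = k.centralBinom := by
    rw [Nat.centralBinom_eq_two_mul_choose, show 3 * k - k = 2 * k by omega]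
  have hconflicts : 2 * ((Fintype.card (Fin (3 * k)) - k).choose k +
      (Fintype.card (Fin (3 * k)) - k).choose k + (k + k).choose k) ≤
      Fintype.card (ZMod M) := by
    rw [Fintype.card_fin, ZMod.card, hchoose, ← two_mul k, ← Nat.centralBinom_eq_two_mul_choose]
    linarith
  obtain ⟨S, hS, hcard⟩ := exists_isTricoloredSumFree_charVec hA hconflicts
  refine ⟨#S, _, _, _, hS.comp_injective S.equivFin.symm.injective, ?_⟩
  rw [card_disjointPairs, Fintype.card_fin, ZMod.card, hchoose] at hcard
  refine Nat.le_of_mul_le_mul_left ?_ k.centralBinom_pos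
  calc k.centralBinom * ((3 * k).choose k * #A)
      = (3 * k).choose k * k.centralBinom * #A := by ring
    _ ≤ 2 * M ^ 2 * #S := hcard
    _ = 2 * M * #S * M := by ring
    _ ≤ 2 * M * #S * (12 * k.centralBinom) := by gcongr
    _ = k.centralBinom * (24 * M * #S) := by ring

theorem logb_two_mem_Icc {k M : ℕ} (hM : 6 * k.centralBinom ≤ M)
    (hM' : M ≤ 12 * k.centralBinom) : Real.logb 2 M ∈ Set.Icc (k : ℝ) (2 * k + 4) := by
  have hM₀ : (0 : ℝ) < M := by
    have := k.centralBinom_pos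
    exact_mod_cast (by omega : 0 < M)
  constructor
  · rw [Real.le_logb_iff_rpow_le one_lt_two hM₀, Real.rpow_natCast]
    exact_mod_cast (two_pow_le_centralBinom k).trans (by omega)
  · rw [Real.logb_le_iff_le_rpow one_lt_two hM₀]
    have hcentral : k.centralBinom ≤ 2 ^ (2 * k) := Nat.choose_le_two_pow _ _
    have : M ≤ 2 ^ (2 * k + 4) := by
      rw [pow_add]
      omega
    exact_mod_cast this

theorem sqrt_eight_mul_le {k L : ℝ} (hk : 16 ≤ k) (hL : L ≤ 2 * k + 4) :
    √(8 * L) ≤ 4 * √k + 1 := by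
  have hsqrt : 4 ≤ √k := Real.le_sqrt_of_sq_le (by linarith)
  refine Real.sqrt_le_iff.2 ⟨by positivity, ?_⟩
  calc 8 * L ≤ 16 * k + 8 * 4 + 1 := by linarith
    _ ≤ 16 * √k ^ 2 + 8 * √k + 1 := by rw [Real.sq_sqrt (by linarith)]; gcongr
    _ = (4 * √k + 1) ^ 2 := by ring

theorem exists_isTricoloredSumFree_choose_mul_rpow_le {k : ℕ} (hk : 200 ≤ k) :
    ∃ (m : ℕ) (a b c : Fin m → Fin (3 * k) → ZMod 2), IsTricoloredSumFree a b c ∧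
      (3 * k).choose k * (k : ℝ) ^ (1 / 4 : ℝ) ≤ 1843200 * 2 ^ (4 * √k) * m := by
  have hk' : (200 : ℝ) ≤ k := mod_cast hk
  have hK : 6 * k.centralBinom ≠ 0 := mul_ne_zero (by norm_num) k.centralBinom_ne_zero
  obtain ⟨M, hprime, hM, hM'⟩ := Nat.exists_prime_lt_and_le_two_mul _ hK
  rw [← mul_assoc] at hM'
  have : Fact M.Prime := ⟨hprime⟩
  have hM₀ : (0 : ℝ) < M := Nat.cast_pos.2 hprime.pos
  obtain ⟨hkL, hLk⟩ := logb_two_mem_Icc hM.le hM'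
  set L := Real.logb 2 M
  have hLM : (2 : ℝ) ^ L = M := Real.rpow_logb two_pos (by norm_num) hM₀
  obtain ⟨A, hA, hAcard⟩ := exists_threeAPFree_rpow_mul_le (hk'.trans hkL) hLM
  obtain ⟨m, a, b, c, habc, hcard⟩ := exists_isTricoloredSumFree_of_threeAPFree hM.le hM' hA
  have hcard' : ((3 * k).choose k * #A : ℝ) ≤ 24 * M * m := mod_cast hcard
  have hpow : (2 : ℝ) ^ √(8 * L) ≤ 2 * 2 ^ (4 * √k) := by
    rw [mul_comm 2, ← Real.rpow_add_one two_ne_zero]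
    exact Real.rpow_le_rpow_of_exponent_le one_le_two (sqrt_eight_mul_le (by linarith) hLk)
  refine ⟨m, a, b, c, habc, le_of_mul_le_mul_right ?_ hM₀⟩
  calc (3 * k).choose k * (k : ℝ) ^ (1 / 4 : ℝ) * M
      ≤ (3 * k).choose k * (L ^ (1 / 4 : ℝ) * M) := by rw [mul_assoc]; gcongr
    _ ≤ (3 * k).choose k * (38400 * (2 * 2 ^ (4 * √k)) * #A) := by
      refine mul_le_mul_of_nonneg_left (hAcard.trans ?_) (by positivity)
      gcongr
    _ = 76800 * 2 ^ (4 * √k) * ((3 * k).choose k * #A) := by ring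
    _ ≤ 76800 * 2 ^ (4 * √k) * (24 * M * m) := by gcongr
    _ = 1843200 * 2 ^ (4 * √k) * m * M := by ring

/-- For all sufficiently large `n` divisible by 3, there is a tri-colored
sum-free set in `𝔽₂ⁿ` of size greater than `C(n, n/3) * 2^{-√(16n/3)}`. -/
theorem stmt19 :
    ∃ N : ℕ, ∀ n ≥ N, 3 ∣ n →
      ∃ (m : ℕ) (a b c : Fin m → (Fin n → ZMod 2)),
        (∀ i j k, a i + b j + c k = 0 ↔ (i = j ∧ j = k)) ∧
        (m : ℝ) > (n.choose (n / 3) : ℝ) *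
          Real.rpow 2 (-Real.sqrt (16 * n / 3)) := by
  have hlarge : ∀ᶠ k : ℕ in Filter.atTop, 1843200 < (k : ℝ) ^ (1 / 4 : ℝ) :=
    ((tendsto_rpow_atTop (by norm_num)).comp tendsto_natCast_atTop_atTop).eventually_gt_atTop _
  obtain ⟨k₀, hk₀⟩ := Filter.eventually_atTop.1 hlarge
  refine ⟨3 * max k₀ 200, ?_⟩
  rintro _ hn ⟨k, rfl⟩
  obtain ⟨m, a, b, c, habc, hm⟩ :=
    exists_isTricoloredSumFree_choose_mul_rpow_le (k := k) (by omega)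
  refine ⟨m, a, b, c, habc, ?_⟩
  have hsqrt : √(16 * (3 * k : ℕ) / 3) = 4 * √k := by
    rw [show (16 * (3 * k : ℕ) / 3 : ℝ) = 4 ^ 2 * k by push_cast; ring,
      Real.sqrt_mul (by norm_num), Real.sqrt_sq (by norm_num)]
  have hchoose : (0 : ℝ) < (3 * k).choose k := Nat.cast_pos.2 (Nat.choose_pos (by omega))
  rw [Nat.mul_div_cancel_left k three_pos, hsqrt, Real.rpow_eq_pow, Real.rpow_neg zero_le_two,
    gt_iff_lt, ← div_eq_mul_inv, div_lt_iff₀ (by positivity)]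
  nlinarith [hk₀ k (by omega)]
end
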